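/- Let P : Cᵒᵖ → Pos be a Skolem doctrine, i.e. a doctrine such that: (1) C is cartesian closed; (2) P is existential and universal; (3) P has enough existential-free predicates; (4) existential-free predicates are stable under the universal quantifiers ∀_π along projections (but condition (5) of a Gödel doctrine is not assumed). Then P validates the Skolemisation principle: for all objects A₁, A₂, B of C and every α ∈ P(A₁ × A₂ × B), the equality ∀_π (∃_{π'} α) = ∃_ρ (∀_{ρ'} P_e α) holds in P(A₁), where π : A₁ × A₂ → A₁, π' : A₁ × A₂ × B → A₁ × A₂, ρ : A₁ × B^{A₂} → A₁, ρ' : A₁ × B^{A₂} × A₂ → A₁ × B^{A₂} are product projections, B^{A₂} is the exponential with evaluation ev : B^{A₂} × A₂ → B, and e : A₁ × B^{A₂} × A₂ → A₁ × A₂ × B is the arrow (a₁, f, a₂) ↦ (a₁, a₂, ev(f, a₂)). -/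

import Mathlib

open CategoryTheory MonoidalCategory CartesianMonoidalCategory CartesianClosed

universe v u

/-- A doctrine: a (contravariant) functor from a category `C` with finite products
to the category of posets and monotone maps, presented concretely. -/
structure Doctrine (C : Type u) [Category.{v} C] [CartesianMonoidalCategory C] where
  obj : C → Type*
  ord : ∀ A : C, PartialOrder (obj A)
  map : ∀ {A B : C}, (A ⟶ B) → obj B → obj A
  map_mono : ∀ {A B : C} (f : A ⟶ B), Monotone (map f)
  map_id : ∀ {A : C} (α : obj A), map (𝟙 A) α = α
  map_comp : ∀ {A B D : C} (f : A ⟶ B) (g : B ⟶ D) (α : obj D),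
    map (f ≫ g) α = map f (map g α)

attribute [instance] Doctrine.ord

/-- A doctrine that is both existential and universal: reindexing along the two
product projections has both adjoints, satisfying the Beck–Chevalley condition. -/
structure EUDoctrine (C : Type u) [Category.{v} C] [CartesianMonoidalCategory C]
    extends Doctrine C where
  ex1 : ∀ {A B : C}, obj (A ⊗ B) → obj A
  ex1_gc : ∀ (A B : C), GaloisConnection (ex1 (A := A) (B := B)) (map (fst A B))
  ex2 : ∀ {A B : C}, obj (A ⊗ B) → obj B
  ex2_gc : ∀ (A B : C), GaloisConnection (ex2 (A := A) (B := B)) (map (snd A B))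
  ex1_bc : ∀ {A A' B : C} (f : A' ⟶ A) (β : obj (A ⊗ B)),
    ex1 (map (f ⊗ₘ 𝟙 B) β) = map f (ex1 β)
  ex2_bc : ∀ {A B B' : C} (f : B' ⟶ B) (β : obj (A ⊗ B)),
    ex2 (map (𝟙 A ⊗ₘ f) β) = map f (ex2 β)
  all1 : ∀ {A B : C}, obj (A ⊗ B) → obj A
  all1_gc : ∀ (A B : C), GaloisConnection (map (fst A B)) (all1 (A := A) (B := B))
  all2 : ∀ {A B : C}, obj (A ⊗ B) → obj B
  all2_gc : ∀ (A B : C), GaloisConnection (map (snd A B)) (all2 (A := A) (B := B))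
  all1_bc : ∀ {A A' B : C} (f : A' ⟶ A) (β : obj (A ⊗ B)),
    all1 (map (f ⊗ₘ 𝟙 B) β) = map f (all1 β)
  all2_bc : ∀ {A B B' : C} (f : B' ⟶ B) (β : obj (A ⊗ B)),
    all2 (map (𝟙 A ⊗ₘ f) β) = map f (all2 β)

namespace EUDoctrine

variable {C : Type u} [Category.{v} C] [CartesianMonoidalCategory C] (D : EUDoctrine C)

/-- `α` is an existential splitting: whenever `α ≤ ∃_{π_A} β` there is `g : A ⟶ B`
with `α ≤ P_⟨1_A, g⟩ β`. -/
def ExSplitting {A : C} (α : D.obj A) : Prop :=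
  ∀ (B : C) (β : D.obj (A ⊗ B)), α ≤ D.ex1 β →
    ∃ g : A ⟶ B, α ≤ D.map (lift (𝟙 A) g) β

/-- `α` is existential-free: every reindexing of `α` is an existential splitting. -/
def ExFree {I : C} (α : D.obj I) : Prop :=
  ∀ (A : C) (f : A ⟶ I), D.ExSplitting (D.map f α)

/-- `α` is a universal splitting in the subdoctrine of existential-free predicates. -/
def UnivSplittingSub {A : C} (α : D.obj A) : Prop :=
  ∀ (B : C) (β : D.obj (A ⊗ B)), D.ExFree β → D.all1 β ≤ α →
    ∃ g : A ⟶ B, D.map (lift (𝟙 A) g) β ≤ α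

/-- `α` is universal-free in the subdoctrine of existential-free predicates. -/
def UnivFreeSub {I : C} (α : D.obj I) : Prop :=
  ∀ (A : C) (f : A ⟶ I), D.UnivSplittingSub (D.map f α)

/-- `α` is quantifier-free: existential-free and universal-free in the subdoctrine of
existential-free predicates. -/
def QFree {I : C} (α : D.obj I) : Prop := D.ExFree α ∧ D.UnivFreeSub α

end EUDoctrine

/-- A Skolem doctrine: all the conditions of a Gödel doctrine except for the requirement
that the subdoctrine of existential-free predicates has enough universal-free predicates. -/
structure SkolemDoctrine (C : Type u) [Category.{v} C] [CartesianMonoidalCategory C]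
    [MonoidalClosed C] extends EUDoctrine C where
  enough_exFree : ∀ (I : C) (α : obj I), ∃ (A : C) (β : obj (I ⊗ A)),
    toEUDoctrine.ExFree β ∧ α = ex1 β
  exFree_all1 : ∀ {A B : C} (α : obj (A ⊗ B)),
    toEUDoctrine.ExFree α → toEUDoctrine.ExFree (all1 α)
  exFree_all2 : ∀ {A B : C} (α : obj (A ⊗ B)),
    toEUDoctrine.ExFree α → toEUDoctrine.ExFree (all2 α)

/-!
Write `∀a₂.∃b.α` as `∃x.γ` with `γ` existential-free. The reindexing of `γ` to
`(A₁ × X) × A₂` entails `∃b.α` and is again an existential splitting, so there is a witness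
`g : (A₁ × X) × A₂ ⟶ B`. Its transpose `A₁ × X ⟶ B^{A₂}` is the Skolem function which shows that
`γ`, and hence `∃x.γ`, entails `∃f.∀a₂.α(a₁, a₂, f a₂)`. The converse entailment is intuitionistic
logic.
-/

namespace SkolemDoctrine

section Exponential

variable {C : Type u} [Category.{v} C] [CartesianMonoidalCategory C]

/-- The transpose `Γ ⟶ B^A` of an arrow `g : Γ × A ⟶ B`. The factors are swapped because
Mathlib's `MonoidalClosed.curry` transposes the left one. -/
def curryRight {Γ A B : C} [Closed A] (g : Γ ⊗ A ⟶ B) : Γ ⟶ (A ⟹ B) :=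
  MonoidalClosed.curry (lift (snd A Γ) (fst A Γ) ≫ g)

/-- The arrow `(a₁, f, a₂) ↦ (a₁, a₂, ev(f, a₂))` along which the Skolemisation principle
reindexes. -/
def skolemArrow (A₁ A₂ B : C) [Closed A₂] :
    (A₁ ⊗ (A₂ ⟹ B)) ⊗ A₂ ⟶ (A₁ ⊗ A₂) ⊗ B :=
  lift (lift (fst (A₁ ⊗ (A₂ ⟹ B)) A₂ ≫ fst A₁ (A₂ ⟹ B)) (snd (A₁ ⊗ (A₂ ⟹ B)) A₂))
    (lift (snd (A₁ ⊗ (A₂ ⟹ B)) A₂) (fst (A₁ ⊗ (A₂ ⟹ B)) A₂ ≫ snd A₁ (A₂ ⟹ B)) ≫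
      (ihom.ev A₂).app B)

theorem lift_snd_fst_curryRight_ev {Γ A B : C} [Closed A] (g : Γ ⊗ A ⟶ B) :
    lift (snd Γ A) (fst Γ A ≫ curryRight g) ≫ (ihom.ev A).app B = g := by
  calc lift (snd Γ A) (fst Γ A ≫ curryRight g) ≫ (ihom.ev A).app B
      = lift (snd Γ A) (fst Γ A) ≫ A ◁ curryRight g ≫ (ihom.ev A).app B := by simp
    _ = (lift (snd Γ A) (fst Γ A) ≫ lift (snd A Γ) (fst A Γ)) ≫ g := by
      rw [curryRight, MonoidalClosed.whiskerLeft_curry_ihom_ev_app, Category.assoc]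
    _ = g := by simp

theorem skolemArrow_fst (A₁ A₂ B : C) [Closed A₂] :
    skolemArrow A₁ A₂ B ≫ fst (A₁ ⊗ A₂) B = fst A₁ (A₂ ⟹ B) ⊗ₘ 𝟙 A₂ := by
  ext <;> simp [skolemArrow]

theorem lift_curryRight_skolemArrow {Γ A₁ A₂ B : C} [Closed A₂] (f : Γ ⟶ A₁)
    (g : Γ ⊗ A₂ ⟶ B) :
    (lift f (curryRight g) ⊗ₘ 𝟙 A₂) ≫ skolemArrow A₁ A₂ B = lift (f ⊗ₘ 𝟙 A₂) g := by
  apply CartesianMonoidalCategory.hom_ext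
  · rw [Category.assoc, skolemArrow_fst, lift_fst]
    ext <;> simp
  · have args : (lift f (curryRight g) ⊗ₘ 𝟙 A₂) ≫
        lift (snd (A₁ ⊗ (A₂ ⟹ B)) A₂) (fst (A₁ ⊗ (A₂ ⟹ B)) A₂ ≫ snd A₁ (A₂ ⟹ B)) =
          lift (snd Γ A₂) (fst Γ A₂ ≫ curryRight g) := by
      ext <;> simp
    rw [skolemArrow, Category.assoc, lift_snd, lift_snd, ← Category.assoc, args,
      lift_snd_fst_curryRight_ev]

end Exponential

end SkolemDoctrine

namespace EUDoctrine

open SkolemDoctrine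

variable {C : Type u} [Category.{v} C] [CartesianMonoidalCategory C] {D : EUDoctrine C}

theorem map_le_map_comp_fst_ex1 {Γ A B : C} (f : Γ ⟶ A ⊗ B) (β : D.obj (A ⊗ B)) :
    D.map f β ≤ D.map (f ≫ fst A B) (D.ex1 β) := by
  rw [D.map_comp]
  exact D.map_mono f ((D.ex1_gc A B).le_u_l β)

theorem le_map_all1_iff {Γ A B : C} (f : Γ ⟶ A) (γ : D.obj Γ) (β : D.obj (A ⊗ B)) :
    γ ≤ D.map f (D.all1 β) ↔ D.map (fst Γ B) γ ≤ D.map (f ⊗ₘ 𝟙 B) β := by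
  rw [← D.all1_bc, (D.all1_gc Γ B).le_iff_le]

theorem ExFree.exists_le_map_lift {I Γ A B : C} {γ : D.obj I} (hγ : D.ExFree γ) (f : Γ ⟶ I)
    (k : Γ ⟶ A) {β : D.obj (A ⊗ B)} (h : D.map f γ ≤ D.map k (D.ex1 β)) :
    ∃ g : Γ ⟶ B, D.map f γ ≤ D.map (lift k g) β := by
  rw [← D.ex1_bc] at h
  obtain ⟨g, hg⟩ := hγ Γ f B _ h
  refine ⟨g, ?_⟩
  rwa [← D.map_comp, lift_map, Category.id_comp, Category.comp_id] at hg

theorem ExFree.exists_skolem_function {Γ A₁ A₂ B : C} [Closed A₂] {γ : D.obj Γ}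
    (hγ : D.ExFree γ) (f : Γ ⟶ A₁) {α : D.obj ((A₁ ⊗ A₂) ⊗ B)}
    (h : γ ≤ D.map f (D.all1 (D.ex1 α))) :
    ∃ s : Γ ⟶ (A₂ ⟹ B),
      γ ≤ D.map (lift f s) (D.all1 (D.map (skolemArrow A₁ A₂ B) α)) := by
  rw [le_map_all1_iff] at h
  obtain ⟨g, hg⟩ := hγ.exists_le_map_lift (fst Γ A₂) (f ⊗ₘ 𝟙 A₂) h
  refine ⟨curryRight g, ?_⟩
  rwa [le_map_all1_iff, ← D.map_comp, lift_curryRight_skolemArrow]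

theorem ex1_all1_map_skolemArrow_le {A₁ A₂ B : C} [Closed A₂] (α : D.obj ((A₁ ⊗ A₂) ⊗ B)) :
    D.ex1 (D.all1 (D.map (skolemArrow A₁ A₂ B) α)) ≤ D.all1 (D.ex1 α) := by
  rw [(D.ex1_gc _ _).le_iff_le, le_map_all1_iff, ← skolemArrow_fst]
  exact ((D.all1_gc _ _).l_u_le _).trans (map_le_map_comp_fst_ex1 _ α)

variable (D) in
/-- `D` has enough existential-free predicates over `I`: every predicate over `I` is the
existential quantification of an existential-free one. This is the condition
`SkolemDoctrine.enough_exFree` at a single object. -/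
def EnoughExFree (I : C) : Prop :=
  ∀ α : D.obj I, ∃ (A : C) (β : D.obj (I ⊗ A)), D.ExFree β ∧ α = D.ex1 β

end EUDoctrine

open EUDoctrine in
theorem SkolemDoctrine.skolemisation_general {C : Type u} [Category.{v} C]
    [CartesianMonoidalCategory C] (D : EUDoctrine C) (A₁ A₂ B : C) [Closed A₂]
    (hD : D.EnoughExFree A₁) (α : D.obj ((A₁ ⊗ A₂) ⊗ B)) :
    D.all1 (D.ex1 α) = D.ex1 (D.all1 (D.map (skolemArrow A₁ A₂ B) α)) := by
  refine le_antisymm ?_ (ex1_all1_map_skolemArrow_le α)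
  obtain ⟨X, γ, hγ, hαγ⟩ := hD (D.all1 (D.ex1 α))
  have γ_le : γ ≤ D.map (fst A₁ X) (D.all1 (D.ex1 α)) :=
    hαγ ▸ (D.ex1_gc A₁ X).le_u_l γ
  obtain ⟨s, hs⟩ := hγ.exists_skolem_function (fst A₁ X) γ_le
  rw [hαγ, (D.ex1_gc A₁ X).le_iff_le]
  simpa only [lift_fst] using hs.trans (map_le_map_comp_fst_ex1 (lift (fst A₁ X) s) _)

/-- **Skolemisation in a Skolem doctrine** (Remark 1): the Skolemisation principle
`a₁:A₁ | ∀a₂.∃b.α(a₁,a₂,b) ⊣⊢ ∃f.∀a₂.α(a₁,a₂,f a₂)` already holds in any Skolem doctrine,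
i.e. condition (5) of a Gödel doctrine is not needed. -/
theorem SkolemDoctrine.skolemisation {C : Type u} [Category.{v} C]
    [CartesianMonoidalCategory C] [MonoidalClosed C] (D : SkolemDoctrine C)
    (A₁ A₂ B : C) (α : D.obj ((A₁ ⊗ A₂) ⊗ B)) :
    D.all1 (D.ex1 α) =
      D.ex1 (D.all1 (D.map
        (lift (lift (fst (A₁ ⊗ (A₂ ⟹ B)) A₂ ≫ fst A₁ (A₂ ⟹ B))
            (snd (A₁ ⊗ (A₂ ⟹ B)) A₂))
          (lift (snd (A₁ ⊗ (A₂ ⟹ B)) A₂)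
            (fst (A₁ ⊗ (A₂ ⟹ B)) A₂ ≫ snd A₁ (A₂ ⟹ B)) ≫ (ihom.ev A₂).app B)) α)) := by
  exact skolemisation_general D.toEUDoctrine A₁ A₂ B (D.enough_exFree A₁) α
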